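/- For every compact set K ⊆ U × (a,b) there exist N₀ ∈ ℕ and C > 0 such that for every integer N ≥ N₀ one has ĝ₀₀ > 0 on a neighbourhood of K, and at every point of K and for all i, j ∈ {1, …, n}: |R̂_{ij} − R_{ij}| ≤ C/N. (Proposition 2.2, spatial Ricci components.) -/

import Mathlib

/-!
The metric `ĝ` is block diagonal. Its spatial block is `g/τ`, which at fixed time is a constant
multiple of `g`, so the purely spatial Christoffel symbols of `ĝ` are those of `g`, and the terms
of `R̂_{ij}` built from these alone add up to `R_{ij}`. Every remaining term
(`hatRic_sub_Ric`) contains a symbol with upper index `0`,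

* `Γ̂^0_{ij} = -(1/2) ĝ₀₀⁻¹ ∂_τ (g_{ij}/τ)`,
* `Γ̂^0_{i0} = (1/2) ĝ₀₀⁻¹ ∂_i ĝ₀₀`,

or the derivative of one. On a compact set `ĝ₀₀ ≥ c N` for large `N` (`hatg_lower`), so
`ĝ₀₀⁻¹ = O(1/N)`. The term of `ĝ₀₀` that grows with `N` depends on `τ` alone, hence `∂_i ĝ₀₀` and
`∂_j ∂_i ĝ₀₀` do not depend on `N`, and both symbols above are `O(1/N)`. Time derivatives of `ĝ₀₀`
are only `O(N)`, but they always occur in the combination `ĝ₀₀⁻¹ ∂_τ ĝ₀₀ = O(1)`, next to a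
further factor `O(1/N)`. The symbols `Γ̂^i_{0k}` do not depend on `N`. Uniformity over the compact
set `K` is expressed by `=O` along the filter `atTop ×ˢ 𝓟 K` on pairs `(N, p)`.
-/

noncomputable section

open scoped BigOperators

namespace CanonicalSoliton

/-- Space-time `ℝⁿ × ℝ`, a point being `(x, τ)`. -/
abbrev E (n : ℕ) := (Fin n → ℝ) × ℝ

variable {n : ℕ}

/-- Spatial partial derivative `∂_{xⁱ}`. -/
def pdx (i : Fin n) (f : E n → ℝ) (p : E n) : ℝ :=
  fderiv ℝ f p (Pi.single i 1, 0)

/-- Time partial derivative `∂_τ`. -/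
def pdt (f : E n → ℝ) (p : E n) : ℝ :=
  fderiv ℝ f p (0, 1)

/-- Coordinate directions on space-time; the index `0` is the time direction `∂/∂τ`,
and the index `i.succ` is the spatial direction `∂/∂xⁱ`. -/
def dir (a : Fin (n + 1)) : E n :=
  Fin.cases ((0 : Fin n → ℝ), (1 : ℝ)) (fun i => (Pi.single i 1, (0 : ℝ))) a

/-- Partial derivative `∂_{x^a}` on space-time, `x⁰ = τ` being time. -/
def pd (a : Fin (n + 1)) (f : E n → ℝ) (p : E n) : ℝ :=
  fderiv ℝ f p (dir a)

variable (g : E n → Matrix (Fin n) (Fin n) ℝ)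

/-- Entries `g^{ij}` of the inverse metric. -/
def ginv (p : E n) : Matrix (Fin n) (Fin n) ℝ := (g p)⁻¹

/-- Christoffel symbols `Γ^i_{jk} = (1/2) g^{il} (∂_{x^j} g_{kl} + ∂_{x^k} g_{jl} − ∂_{x^l} g_{jk})`. -/
def Chr (i j k : Fin n) (p : E n) : ℝ :=
  (1 / 2) * ∑ l, ginv g p i l *
    (pdx j (fun q => g q k l) p + pdx k (fun q => g q j l) p - pdx l (fun q => g q j k) p)

/-- Ricci tensor `R_{jk} = ∂_{x^i} Γ^i_{jk} − ∂_{x^k} Γ^i_{ji} + Γ^i_{jk} Γ^l_{il} − Γ^l_{ji} Γ^i_{lk}`. -/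
def Ric (j k : Fin n) (p : E n) : ℝ :=
  (∑ i, pdx i (Chr g i j k) p) - pdx k (fun q => ∑ i, Chr g i j i q) p
    + (∑ i, ∑ l, Chr g i j k p * Chr g l i l p)
    - ∑ i, ∑ l, Chr g l j i p * Chr g i l k p

/-- Ricci tensor with one index raised: `R^i_j := g^{ik} R_{kj}`. -/
def RicUp (i j : Fin n) (p : E n) : ℝ := ∑ k, ginv g p i k * Ric g k j p

/-- Scalar curvature `R := g^{jk} R_{jk}`. -/
def scal (p : E n) : ℝ := ∑ j, ∑ k, ginv g p j k * Ric g j k p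

/-- `R_τ := ∂_τ R`. -/
def scalτ (p : E n) : ℝ := pdt (scal g) p

/-- Entries of the canonical shrinking-soliton metric `ĝ`:
`ĝ_{ij} = g_{ij}/τ`, `ĝ₀₀ = N/(2τ³) + R/τ − n/(2τ²)`, `ĝ_{0i} = 0`. -/
def hatg (N : ℕ) (a b : Fin (n + 1)) (p : E n) : ℝ :=
  Fin.cases
    (Fin.cases ((N : ℝ) / (2 * p.2 ^ 3) + scal g p / p.2 - (n : ℝ) / (2 * p.2 ^ 2))
      (fun _ => 0) b)
    (fun i => Fin.cases (0 : ℝ) (fun j => g p i j / p.2) b) a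

/-- Entries of the inverse of `ĝ`: `ĝ^{ij} = τ g^{ij}`, `ĝ^{00} = (ĝ₀₀)⁻¹`, `ĝ^{0i} = 0`. -/
def hatginv (N : ℕ) (a b : Fin (n + 1)) (p : E n) : ℝ :=
  Fin.cases
    (Fin.cases (hatg g N 0 0 p)⁻¹ (fun _ => 0) b)
    (fun i => Fin.cases (0 : ℝ) (fun j => p.2 * ginv g p i j) b) a

/-- Christoffel symbols of `ĝ`:
`Γ̂^a_{bc} = (1/2) ĝ^{ad} (∂_{x^b} ĝ_{cd} + ∂_{x^c} ĝ_{bd} − ∂_{x^d} ĝ_{bc})`. -/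
def hatChr (N : ℕ) (a b c : Fin (n + 1)) (p : E n) : ℝ :=
  (1 / 2) * ∑ d, hatginv g N a d p *
    (pd b (hatg g N c d) p + pd c (hatg g N b d) p - pd d (hatg g N b c) p)

/-- Ricci tensor of `ĝ`:
`R̂_{ab} = ∂_{x^c} Γ̂^c_{ab} − ∂_{x^b} Γ̂^c_{ac} + Γ̂^c_{ab} Γ̂^d_{cd} − Γ̂^d_{ac} Γ̂^c_{bd}`. -/
def hatRic (N : ℕ) (a b : Fin (n + 1)) (p : E n) : ℝ :=
  (∑ c, pd c (hatChr g N c a b) p) - pd b (fun q => ∑ c, hatChr g N c a c q) p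
    + (∑ c, ∑ d, hatChr g N c a b p * hatChr g N d c d p)
    - ∑ c, ∑ d, hatChr g N d a c p * hatChr g N c b d p

/-- Hessian with respect to `ĝ`: `∇̂²_{ab} f = ∂_{x^a} ∂_{x^b} f − (∂_{x^c} f) Γ̂^c_{ab}`. -/
def hatHess (N : ℕ) (f : E n → ℝ) (a b : Fin (n + 1)) (p : E n) : ℝ :=
  pd a (fun q => pd b f q) p - ∑ c, pd c f p * hatChr g N c a b p

end CanonicalSoliton

open CanonicalSoliton

namespace CanonicalSoliton

open Filter Asymptotics Topology

variable {n : ℕ}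

/-! ### Calculus of coordinate derivatives -/

lemma pd_zero_fun (a : Fin (n + 1)) (p : E n) : pd a (fun _ => (0 : ℝ)) p = 0 := by
  simp [pd]

lemma pd_add {f k : E n → ℝ} {p : E n} (a : Fin (n + 1)) (hf : DifferentiableAt ℝ f p)
    (hk : DifferentiableAt ℝ k p) : pd a (fun q => f q + k q) p = pd a f p + pd a k p := by
  simp only [pd]
  rw [fderiv_fun_add hf hk]
  rfl

lemma pd_congr {Ω : Set (E n)} (hΩ : IsOpen Ω) {f k : E n → ℝ} (h : ∀ q ∈ Ω, f q = k q)
    (a : Fin (n + 1)) {p : E n} (hp : p ∈ Ω) : pd a f p = pd a k p := by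
  have : f =ᶠ[𝓝 p] k := by
    filter_upwards [hΩ.mem_nhds hp] with q hq using h q hq
  simp only [pd, this.fderiv_eq]

lemma pd_inv_mul {h P : E n → ℝ} {p : E n} (a : Fin (n + 1)) (c : ℝ)
    (hh : DifferentiableAt ℝ h p) (hP : DifferentiableAt ℝ P p) (h0 : h p ≠ 0) :
    pd a (fun q => c * ((h q)⁻¹ * P q)) p =
      c * ((h p)⁻¹ * pd a P p - (h p)⁻¹ * ((h p)⁻¹ * pd a h p) * P p) := by
  have h1 : HasFDerivAt (fun q => (h q)⁻¹) (-(h p ^ 2)⁻¹ • fderiv ℝ h p) p :=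
    (hasDerivAt_inv h0).comp_hasFDerivAt p hh.hasFDerivAt
  have h2 := (h1.mul hP.hasFDerivAt).const_mul c
  simp only [pd]
  erw [h2.fderiv]
  simp
  field_simp
  ring

lemma pd_succ_div {f : E n → ℝ} {p : E n} (k : Fin n) (hf : DifferentiableAt ℝ f p)
    (h0 : p.2 ≠ 0) : pd k.succ (fun q => f q / q.2) p = pdx k f p / p.2 := by
  have h1 : HasFDerivAt (fun q : E n => q.2⁻¹)
      (-(p.2 ^ 2)⁻¹ • ContinuousLinearMap.snd ℝ (Fin n → ℝ) ℝ) p :=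
    (hasDerivAt_inv h0).comp_hasFDerivAt p hasFDerivAt_snd
  have h2 := hf.hasFDerivAt.mul h1
  simp only [pd, pdx, div_eq_mul_inv]
  erw [h2.fderiv]
  simp [dir]
  ring

/-! ### Smoothness of the geometric quantities -/

lemma contDiffOn_pd {Ω : Set (E n)} (hΩ : IsOpen Ω) {f : E n → ℝ}
    (hf : ContDiffOn ℝ (⊤ : ℕ∞) f Ω) (a : Fin (n + 1)) :
    ContDiffOn ℝ (⊤ : ℕ∞) (pd a f) Ω := by
  have h := hf.fderiv_of_isOpen hΩ (m := (⊤ : ℕ∞)) (by simp)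
  exact h.clm_apply contDiffOn_const

lemma pdx_eq_pd (i : Fin n) (f : E n → ℝ) : pdx i f = pd i.succ f := rfl

lemma contDiffOn_det {Ω : Set (E n)} {m : ℕ} {A : E n → Matrix (Fin m) (Fin m) ℝ}
    (hA : ∀ i j, ContDiffOn ℝ (⊤ : ℕ∞) (fun p => A p i j) Ω) :
    ContDiffOn ℝ (⊤ : ℕ∞) (fun p => (A p).det) Ω := by
  simp only [Matrix.det_apply']
  exact ContDiffOn.sum fun σ _ => contDiffOn_const.mul (contDiffOn_prod fun i _ => hA _ _)

variable {Ω : Set (E n)} {g : E n → Matrix (Fin n) (Fin n) ℝ}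

/-- Cramer's rule makes the entries of the inverse rational in the entries of `g`. -/
lemma contDiffOn_ginv (hg : ∀ i j, ContDiffOn ℝ (⊤ : ℕ∞) (fun p => g p i j) Ω)
    (hpos : ∀ p ∈ Ω, (g p).PosDef) (i j : Fin n) :
    ContDiffOn ℝ (⊤ : ℕ∞) (fun p => ginv g p i j) Ω := by
  have hadj : ContDiffOn ℝ (⊤ : ℕ∞) (fun p => (g p).adjugate i j) Ω := by
    simp only [Matrix.adjugate_apply]
    refine contDiffOn_det fun k l => ?_
    by_cases hk : k = j
    · subst hk
      simpa using contDiffOn_const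
    · simpa [Matrix.updateRow_ne hk] using hg k l
  have hd : ∀ p ∈ Ω, (g p).det ≠ 0 := fun p hp => (hpos p hp).det_pos.ne'
  have := ((contDiffOn_det hg).inv hd).mul hadj
  simpa [ginv, Matrix.inv_def] using this

lemma contDiffOn_Chr (hΩ : IsOpen Ω) (hg : ∀ i j, ContDiffOn ℝ (⊤ : ℕ∞) (fun p => g p i j) Ω)
    (hpos : ∀ p ∈ Ω, (g p).PosDef) (i j k : Fin n) :
    ContDiffOn ℝ (⊤ : ℕ∞) (Chr g i j k) Ω := by
  unfold Chr
  refine contDiffOn_const.mul (ContDiffOn.sum fun l _ => (contDiffOn_ginv hg hpos i l).mul ?_)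
  exact ((contDiffOn_pd hΩ (hg k l) j.succ).add (contDiffOn_pd hΩ (hg j l) k.succ)).sub
    (contDiffOn_pd hΩ (hg j k) l.succ)

lemma Chr_symm (hΩ : IsOpen Ω) (hsymm : ∀ p ∈ Ω, (g p).IsSymm) (i j k : Fin n)
    {p : E n} (hp : p ∈ Ω) : Chr g i j k p = Chr g i k j p := by
  have h : ∀ l, pdx l (fun q => g q j k) p = pdx l (fun q => g q k j) p := fun l =>
    pd_congr hΩ (fun q hq => (hsymm q hq).apply k j) l.succ hp
  simp only [Chr, h]
  congr 1
  refine Finset.sum_congr rfl fun l _ => ?_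
  ring

lemma contDiffOn_scal (hΩ : IsOpen Ω) (hg : ∀ i j, ContDiffOn ℝ (⊤ : ℕ∞) (fun p => g p i j) Ω)
    (hpos : ∀ p ∈ Ω, (g p).PosDef) : ContDiffOn ℝ (⊤ : ℕ∞) (scal g) Ω := by
  have hC := contDiffOn_Chr hΩ hg hpos
  have hRic : ∀ j k, ContDiffOn ℝ (⊤ : ℕ∞) (Ric g j k) Ω := by
    intro j k
    unfold Ric
    refine ContDiffOn.sub (ContDiffOn.add (ContDiffOn.sub ?_ ?_) ?_) ?_
    · exact ContDiffOn.sum fun i _ => contDiffOn_pd hΩ (hC i j k) i.succ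
    · exact contDiffOn_pd hΩ (ContDiffOn.sum fun i _ => hC i j i) k.succ
    · exact ContDiffOn.sum fun i _ => ContDiffOn.sum fun l _ => (hC i j k).mul (hC l i l)
    · exact ContDiffOn.sum fun i _ => ContDiffOn.sum fun l _ => (hC l j i).mul (hC i l k)
  unfold scal
  exact ContDiffOn.sum fun j _ => ContDiffOn.sum fun k _ =>
    (contDiffOn_ginv hg hpos j k).mul (hRic j k)

lemma contDiffOn_div_snd (hτ : ∀ p ∈ Ω, p.2 ≠ 0) {f : E n → ℝ}
    (hf : ContDiffOn ℝ (⊤ : ℕ∞) f Ω) : ContDiffOn ℝ (⊤ : ℕ∞) (fun p => f p / p.2) Ω :=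
  hf.div contDiffOn_snd hτ

lemma contDiffOn_leading (hτ : ∀ p ∈ Ω, p.2 ≠ 0) :
    ContDiffOn ℝ (⊤ : ℕ∞) (fun p : E n => 1 / (2 * p.2 ^ 3)) Ω :=
  contDiffOn_const.div (contDiffOn_const.mul (contDiffOn_snd.pow 3))
    fun p hp => mul_ne_zero two_ne_zero (pow_ne_zero 3 (hτ p hp))

lemma hatg_zero_zero_eq (N : ℕ) (p : E n) :
    hatg g N 0 0 p = N * (1 / (2 * p.2 ^ 3)) + hatg g 0 0 0 p := by
  simp [hatg]
  ring

lemma contDiffOn_hatg (hΩ : IsOpen Ω) (hg : ∀ i j, ContDiffOn ℝ (⊤ : ℕ∞) (fun p => g p i j) Ω)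
    (hpos : ∀ p ∈ Ω, (g p).PosDef) (hτ : ∀ p ∈ Ω, p.2 ≠ 0) (N : ℕ) :
    ContDiffOn ℝ (⊤ : ℕ∞) (hatg g N 0 0) Ω := by
  have h1 : ContDiffOn ℝ (⊤ : ℕ∞) (fun p : E n => (N : ℝ) / (2 * p.2 ^ 3)) Ω :=
    contDiffOn_const.div (contDiffOn_const.mul (contDiffOn_snd.pow 3))
      fun p hp => mul_ne_zero two_ne_zero (pow_ne_zero 3 (hτ p hp))
  have h2 : ContDiffOn ℝ (⊤ : ℕ∞) (fun p : E n => (n : ℝ) / (2 * p.2 ^ 2)) Ω :=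
    contDiffOn_const.div (contDiffOn_const.mul (contDiffOn_snd.pow 2))
      fun p hp => mul_ne_zero two_ne_zero (pow_ne_zero 2 (hτ p hp))
  exact (h1.add (contDiffOn_div_snd hτ (contDiffOn_scal hΩ hg hpos))).sub h2

lemma ContDiffOn.diffAt (hΩ : IsOpen Ω) {f : E n → ℝ} (hf : ContDiffOn ℝ (⊤ : ℕ∞) f Ω)
    {p : E n} (hp : p ∈ Ω) : DifferentiableAt ℝ f p :=
  (hf.contDiffAt (hΩ.mem_nhds hp)).differentiableAt (by simp)

lemma pd_hatg (hΩ : IsOpen Ω) (hg : ∀ i j, ContDiffOn ℝ (⊤ : ℕ∞) (fun p => g p i j) Ω)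
    (hpos : ∀ p ∈ Ω, (g p).PosDef) (hτ : ∀ p ∈ Ω, p.2 ≠ 0) (N : ℕ) (a : Fin (n + 1))
    {p : E n} (hp : p ∈ Ω) :
    pd a (hatg g N 0 0) p =
      N * pd a (fun q : E n => 1 / (2 * q.2 ^ 3)) p + pd a (hatg g 0 0 0) p := by
  have hu := ContDiffOn.diffAt hΩ (contDiffOn_leading hτ) hp
  rw [show hatg g N 0 0 = fun q => N * (1 / (2 * q.2 ^ 3)) + hatg g 0 0 0 q from
      funext (hatg_zero_zero_eq N),
    pd_add a (hu.const_mul _) (ContDiffOn.diffAt hΩ (contDiffOn_hatg hΩ hg hpos hτ 0) hp)]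
  congr 1
  simp only [pd]
  rw [fderiv_const_mul hu]
  rfl

/-- The coefficient of `N` in `ĝ₀₀` depends on `τ` alone, so the spatial derivatives of `ĝ₀₀`
do not depend on `N`. -/
lemma pd_succ_hatg (hΩ : IsOpen Ω) (hg : ∀ i j, ContDiffOn ℝ (⊤ : ℕ∞) (fun p => g p i j) Ω)
    (hpos : ∀ p ∈ Ω, (g p).PosDef) (hτ : ∀ p ∈ Ω, p.2 ≠ 0) (N : ℕ) (k : Fin n)
    {p : E n} (hp : p ∈ Ω) :
    pd k.succ (hatg g N 0 0) p = pd k.succ (hatg g 0 0 0) p := by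
  have h2 : DifferentiableAt ℝ (fun t : ℝ => 1 / (2 * t ^ 3)) p.2 := by
    have := hτ p hp
    fun_prop (disch := positivity)
  have : pd k.succ (fun q : E n => 1 / (2 * q.2 ^ 3)) p = 0 := by
    have h3 := h2.hasFDerivAt.comp p hasFDerivAt_snd
    simp only [pd]
    erw [h3.fderiv]
    simp [dir]
  rw [pd_hatg hΩ hg hpos hτ N _ hp, this]
  ring

/-! ### Christoffel symbols of the soliton metric -/

/-- The mixed symbols `Γ̂^i_{0k} = (1/2) τ g^{il} ∂_τ (g_{kl}/τ)`, which do not depend on `N`. -/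
def mixedChr (g : E n → Matrix (Fin n) (Fin n) ℝ) (i k : Fin n) (p : E n) : ℝ :=
  (1 / 2) * ∑ l, p.2 * ginv g p i l * pd 0 (fun q => g q k l / q.2) p

lemma hatg_zero_succ (N : ℕ) (k : Fin n) : hatg g N 0 k.succ = fun _ => 0 := rfl
lemma hatg_succ_zero (N : ℕ) (k : Fin n) : hatg g N k.succ 0 = fun _ => 0 := rfl
lemma hatg_succ_succ (N : ℕ) (j k : Fin n) :
    hatg g N j.succ k.succ = fun q => g q j k / q.2 := rfl
lemma hatginv_zero_zero (N : ℕ) (p : E n) : hatginv g N 0 0 p = (hatg g N 0 0 p)⁻¹ := rfl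
lemma hatginv_zero_succ (N : ℕ) (k : Fin n) (p : E n) : hatginv g N 0 k.succ p = 0 := rfl
lemma hatginv_succ_zero (N : ℕ) (k : Fin n) (p : E n) : hatginv g N k.succ 0 p = 0 := rfl
lemma hatginv_succ_succ (N : ℕ) (j k : Fin n) (p : E n) :
    hatginv g N j.succ k.succ p = p.2 * ginv g p j k := rfl

lemma hatChr_zero_succ_succ (N : ℕ) (j k : Fin n) :
    hatChr g N 0 j.succ k.succ =
      fun p => (-1 / 2) * ((hatg g N 0 0 p)⁻¹ * pd 0 (fun q => g q j k / q.2) p) := by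
  funext p
  simp only [hatChr, Fin.sum_univ_succ, hatginv_zero_zero, hatginv_zero_succ, hatg_succ_zero,
    hatg_succ_succ, pd_zero_fun]
  simp
  ring

lemma hatChr_zero_succ_zero (N : ℕ) (k : Fin n) :
    hatChr g N 0 k.succ 0 =
      fun p => (1 / 2) * ((hatg g N 0 0 p)⁻¹ * pd k.succ (hatg g N 0 0) p) := by
  funext p
  simp only [hatChr, Fin.sum_univ_succ, hatginv_zero_zero, hatginv_zero_succ, hatg_succ_zero,
    pd_zero_fun]
  simp

lemma hatChr_zero_zero_zero (N : ℕ) (p : E n) :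
    hatChr g N 0 0 0 p = (1 / 2) * ((hatg g N 0 0 p)⁻¹ * pd 0 (hatg g N 0 0) p) := by
  simp only [hatChr, Fin.sum_univ_succ, hatginv_zero_zero, hatginv_zero_succ]
  simp

lemma hatChr_succ_succ_zero (N : ℕ) (i k : Fin n) (p : E n) :
    hatChr g N i.succ k.succ 0 p = mixedChr g i k p := by
  simp only [hatChr, mixedChr, Fin.sum_univ_succ, hatginv_succ_zero, hatginv_succ_succ,
    hatg_succ_zero, hatg_zero_succ, hatg_succ_succ, pd_zero_fun]
  simp

lemma hatChr_succ_zero_succ (N : ℕ) (i k : Fin n) (p : E n) :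
    hatChr g N i.succ 0 k.succ p = mixedChr g i k p := by
  simp only [hatChr, mixedChr, Fin.sum_univ_succ, hatginv_succ_zero, hatginv_succ_succ,
    hatg_succ_zero, hatg_zero_succ, hatg_succ_succ, pd_zero_fun]
  simp

/-- At fixed time `ĝ` restricts to a constant multiple of `g`, so the spatial symbols agree. -/
lemma hatChr_succ_succ_succ (hΩ : IsOpen Ω)
    (hg : ∀ i j, ContDiffOn ℝ (⊤ : ℕ∞) (fun p => g p i j) Ω)
    (hτ : ∀ p ∈ Ω, p.2 ≠ 0) (N : ℕ) (i j k : Fin n) {p : E n} (hp : p ∈ Ω) :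
    hatChr g N i.succ j.succ k.succ p = Chr g i j k p := by
  have hd := fun i j => ContDiffOn.diffAt hΩ (hg i j) hp
  have h0 := hτ p hp
  simp only [hatChr, Chr, Fin.sum_univ_succ, hatginv_succ_zero, hatginv_succ_succ,
    hatg_succ_succ, pd_succ_div _ (hd _ _) h0]
  simp only [zero_mul, zero_add]
  congr 1
  refine Finset.sum_congr rfl fun l _ => ?_
  field_simp

lemma hatChr_zero_zero_succ (N : ℕ) (k : Fin n) (p : E n) :
    hatChr g N 0 0 k.succ p = hatChr g N 0 k.succ 0 p := by
  simp only [hatChr, Fin.sum_univ_succ, hatginv_zero_zero, hatginv_zero_succ, hatg_succ_zero,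
    hatg_zero_succ, pd_zero_fun]
  simp

/-! ### The error term in the spatial Ricci components -/

/-- Each summand on the right contains one of the symbols `Γ̂^0_{jk}`, `Γ̂^0_{k0}` or a derivative
of one, and those carry the factor `ĝ₀₀⁻¹`. -/
lemma hatRic_sub_Ric (hΩ : IsOpen Ω) (hg : ∀ i j, ContDiffOn ℝ (⊤ : ℕ∞) (fun p => g p i j) Ω)
    (hsymm : ∀ p ∈ Ω, (g p).IsSymm) (hpos : ∀ p ∈ Ω, (g p).PosDef) (hτ : ∀ p ∈ Ω, p.2 ≠ 0) (N : ℕ) (i j : Fin n)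
    {p : E n} (hp : p ∈ Ω) (h0 : hatg g N 0 0 p ≠ 0) :
    hatRic g N i.succ j.succ p - Ric g i j p =
      pd 0 (hatChr g N 0 i.succ j.succ) p - pd j.succ (hatChr g N 0 i.succ 0) p
      + (hatChr g N 0 i.succ j.succ p * (hatChr g N 0 0 0 p + ∑ k, mixedChr g k k p)
        + ∑ k, Chr g k i j p * hatChr g N 0 k.succ 0 p)
      - (hatChr g N 0 i.succ 0 p * hatChr g N 0 j.succ 0 p
        + ∑ k, mixedChr g k i p * hatChr g N 0 j.succ k.succ p
        + ∑ k, hatChr g N 0 i.succ k.succ p * mixedChr g k j p) := by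
  have hCC : ∀ i j k, ∀ q ∈ Ω, hatChr g N i.succ j.succ k.succ q = Chr g i j k q :=
    fun i j k q hq => hatChr_succ_succ_succ hΩ hg hτ N i j k hq
  have hC := contDiffOn_Chr hΩ hg hpos
  have hh := contDiffOn_hatg hΩ hg hpos hτ N
  have e1 : ∀ k, pd k.succ (hatChr g N k.succ i.succ j.succ) p = pdx k (Chr g k i j) p :=
    fun k => pd_congr hΩ (hCC k i j) _ hp
  have hd : DifferentiableAt ℝ (hatChr g N 0 i.succ 0) p := by
    rw [hatChr_zero_succ_zero]
    exact (((ContDiffOn.diffAt hΩ hh hp).inv h0).mul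
      (ContDiffOn.diffAt hΩ (contDiffOn_pd hΩ hh _) hp)).const_mul _
  have e2 : pd j.succ (fun q => ∑ c, hatChr g N c i.succ c q) p =
      pd j.succ (hatChr g N 0 i.succ 0) p + pdx j (fun q => ∑ k, Chr g k i k q) p := by
    rw [pdx_eq_pd, ← pd_add _ hd
      (ContDiffOn.diffAt hΩ (ContDiffOn.sum fun k _ => hC k i k) hp)]
    refine pd_congr hΩ (fun q hq => ?_) _ hp
    simp only [Fin.sum_univ_succ, hCC _ _ _ q hq]
  -- the two Ricci formulas order the lower indices of the last factor differently
  have e3 : ∑ x, ∑ y, Chr g y i x p * Chr g x y j p = ∑ x, ∑ y, Chr g y i x p * Chr g x j y p :=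
    Finset.sum_congr rfl fun x _ => Finset.sum_congr rfl fun y _ => by
      rw [Chr_symm hΩ hsymm x y j hp]
  rw [hatRic, Ric, e2, e3]
  simp only [Fin.sum_univ_succ, e1, hCC _ _ _ p hp, hatChr_succ_succ_zero, hatChr_succ_zero_succ,
    mul_add, Finset.sum_add_distrib, Finset.mul_sum]
  ring

/-! ### Uniform asymptotics on a compact set -/

lemma isBigO_one {K : Set (E n)} (hK : IsCompact K) (hKΩ : K ⊆ Ω) {f : E n → ℝ}
    (hf : ContDiffOn ℝ (⊤ : ℕ∞) f Ω) :
    (fun x : ℕ × E n => f x.2) =O[atTop ×ˢ 𝓟 K] (fun _ => (1 : ℝ)) := by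
  obtain ⟨C, hC⟩ := hK.exists_bound_of_continuousOn (hf.continuousOn.mono hKΩ)
  refine IsBigO.of_bound C ?_
  rw [eventually_prod_principal_iff]
  exact Eventually.of_forall fun N p hp => by simpa using hC p hp

end CanonicalSoliton

/-- On `K` one has `ĝ₀₀ ≥ c N` for all large `N`, since `τ` is bounded above. -/
lemma CanonicalSoliton.hatg_lower {n : ℕ} {K Ω : Set (E n)}
    {g : E n → Matrix (Fin n) (Fin n) ℝ} {b : ℝ} (hK : IsCompact K) (hKΩ : K ⊆ Ω)
    (hh : ContDiffOn ℝ (⊤ : ℕ∞) (hatg g 0 0 0) Ω)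
    (hτ : ∀ p ∈ Ω, 0 < p.2 ∧ p.2 < b) (hb : 0 < b) :
    ∃ c : ℝ, 0 < c ∧ ∃ N₀ : ℕ, 0 < N₀ ∧ ∀ N : ℕ, N₀ ≤ N → ∀ p ∈ K,
      c * N ≤ hatg g N 0 0 p := by
  obtain ⟨M, hM⟩ := hK.exists_bound_of_continuousOn (hh.continuousOn.mono hKΩ)
  -- half of a lower bound for the coefficient `1 / (2 τ³)` of `N`; the other half absorbs `M`
  set c : ℝ := 1 / (4 * b ^ 3) with hc
  have hc0 : 0 < c := by positivity
  obtain ⟨N₀, hN₀⟩ := exists_nat_ge (M / c)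
  refine ⟨c, hc0, N₀ + 1, by omega, fun N hN p hp => ?_⟩
  obtain ⟨h0, h1⟩ := hτ p (hKΩ hp)
  have hu : 2 * c ≤ 1 / (2 * p.2 ^ 3) := by
    have : p.2 ^ 3 ≤ b ^ 3 := by gcongr
    rw [hc, show 2 * (1 / (4 * b ^ 3)) = 1 / (2 * b ^ 3) by field_simp; norm_num]
    gcongr
  have hA := neg_le_of_abs_le (hM p hp)
  have hN' : (N₀ : ℝ) ≤ N := by exact_mod_cast (by omega : N₀ ≤ N)
  have hMN : M ≤ c * N := by
    rw [mul_comm]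
    exact (div_le_iff₀ hc0).1 (hN₀.trans hN')
  have hN0 : (0 : ℝ) ≤ N := N.cast_nonneg
  rw [hatg_zero_zero_eq]
  nlinarith [mul_le_mul_of_nonneg_left hu hN0]

open Filter Asymptotics Topology

theorem stmt6 (n : ℕ) (U : Set (Fin n → ℝ)) (hU : IsOpen U)
    (a b : ℝ) (ha : 0 ≤ a) (hab : a < b)
    (g : E n → Matrix (Fin n) (Fin n) ℝ)
    (hsmooth : ∀ i j, ContDiffOn ℝ (⊤ : ℕ∞) (fun p => g p i j) (U ×ˢ Set.Ioo a b))
    (hsymm : ∀ p ∈ U ×ˢ Set.Ioo a b, (g p).IsSymm)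
    (hpos : ∀ p ∈ U ×ˢ Set.Ioo a b, (g p).PosDef)
    (hflow : ∀ p ∈ U ×ˢ Set.Ioo a b, ∀ j k : Fin n,
      pdt (fun q => g q j k) p = 2 * Ric g j k p)
    (hRbd : ∃ C : ℝ, ∀ p ∈ U ×ˢ Set.Ioo a b, |scal g p| ≤ C) :
    ∀ K : Set (E n), K ⊆ U ×ˢ Set.Ioo a b → IsCompact K →
      ∃ N₀ : ℕ, ∃ C : ℝ, 0 < C ∧ ∀ N : ℕ, N₀ ≤ N →
        (∃ V : Set (E n), IsOpen V ∧ K ⊆ V ∧ V ⊆ U ×ˢ Set.Ioo a b ∧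
          ∀ p ∈ V, 0 < hatg g N 0 0 p) ∧
        ∀ p ∈ K, ∀ i j : Fin n,
          |hatRic g N i.succ j.succ p - Ric g i j p| ≤ C / (N : ℝ) := by
  intro K hKΩ hK
  have hΩ : IsOpen (U ×ˢ Set.Ioo a b) := hU.prod isOpen_Ioo
  have hτ' : ∀ p ∈ U ×ˢ Set.Ioo a b, 0 < p.2 ∧ p.2 < b :=
    fun p hp => ⟨ha.trans_lt hp.2.1, hp.2.2⟩
  generalize U ×ˢ Set.Ioo a b = Ω at *
  have hτ : ∀ p ∈ Ω, p.2 ≠ 0 := fun p hp => (hτ' p hp).1.ne'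
  have hh := contDiffOn_hatg hΩ hsmooth hpos hτ
  obtain ⟨c, hc, N₀, hN₀, hlow⟩ := hatg_lower hK hKΩ (hh 0) hτ' (ha.trans_lt hab)
  have hposK : ∀ N : ℕ, N₀ ≤ N → ∀ p ∈ K, 0 < hatg g N 0 0 p := fun N hN p hp => by
    have : (0 : ℝ) < N := by exact_mod_cast hN₀.trans_le hN
    exact (mul_pos hc this).trans_le (hlow N hN p hp)
  -- the filter of the limit `N → ∞`, uniform on `K`
  set l : Filter (ℕ × E n) := atTop ×ˢ 𝓟 K with hl
  have ev : ∀ {P : ℕ × E n → Prop}, (∀ N : ℕ, N₀ ≤ N → ∀ p ∈ K, P (N, p)) → ∀ᶠ x in l, P x := by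
    intro P h
    rw [hl, eventually_prod_principal_iff]
    filter_upwards [eventually_ge_atTop N₀] with N hN p hp using h N hN p hp
  let ε : ℕ × E n → ℝ := fun x => 1 / (x.1 : ℝ)
  have hinv : (fun x : ℕ × E n => (hatg g x.1 0 0 x.2)⁻¹) =O[l] ε := by
    refine IsBigO.of_bound c⁻¹ (ev fun N hN p hp => ?_)
    have h0 := hposK N hN p hp
    have hN' : (0 : ℝ) < N := by exact_mod_cast hN₀.trans_le hN
    simp only [ε, norm_inv, norm_div, norm_one, RCLike.norm_natCast, Real.norm_of_nonneg h0.le]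
    rw [one_div, ← mul_inv]
    exact inv_anti₀ (by positivity) (hlow N hN p hp)
  have one : ∀ {f : E n → ℝ}, ContDiffOn ℝ (⊤ : ℕ∞) f Ω →
      (fun x : ℕ × E n => f x.2) =O[l] (fun _ => (1 : ℝ)) := fun hf => isBigO_one hK hKΩ hf
  have mulr : ∀ {f k : ℕ × E n → ℝ}, f =O[l] ε → k =O[l] (fun _ => (1 : ℝ)) →
      (fun x => f x * k x) =O[l] ε := fun hf hk => by simpa using hf.mul hk
  have mull : ∀ {f k : ℕ × E n → ℝ}, f =O[l] (fun _ => (1 : ℝ)) → k =O[l] ε →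
      (fun x => f x * k x) =O[l] ε := fun hf hk => by simpa using hf.mul hk
  have εone : ε =O[l] (fun _ => (1 : ℝ)) := by
    refine IsBigO.of_bound 1 (ev fun N hN p hp => ?_)
    have hN' : (1 : ℝ) ≤ N := by exact_mod_cast hN₀.trans_le hN
    simp only [ε, norm_div, norm_one, RCLike.norm_natCast, one_mul]
    exact (div_le_one (by linarith)).2 hN'
  have hP : ∀ i j, ContDiffOn ℝ (⊤ : ℕ∞) (pd 0 (fun q => g q i j / q.2)) Ω :=
    fun i j => contDiffOn_pd hΩ (contDiffOn_div_snd hτ (hsmooth i j)) 0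
  have hB : ∀ i j, ContDiffOn ℝ (⊤ : ℕ∞) (mixedChr g i j) Ω := fun i j =>
    contDiffOn_const.mul (ContDiffOn.sum fun l _ =>
      (contDiffOn_snd.mul (contDiffOn_ginv hsmooth hpos i l)).mul (hP j l))
  have hC := contDiffOn_Chr hΩ hsmooth hpos
  have hdk : ∀ k : Fin n, (fun x : ℕ × E n => pd k.succ (hatg g x.1 0 0) x.2) =O[l]
      (fun _ => (1 : ℝ)) := fun k =>
    (one (contDiffOn_pd hΩ (hh 0) k.succ)).congr'
      (ev fun N _ p hp => (pd_succ_hatg hΩ hsmooth hpos hτ N k (hKΩ hp)).symm)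
      EventuallyEq.rfl
  have hdjk : ∀ j k : Fin n,
      (fun x : ℕ × E n => pd j.succ (pd k.succ (hatg g x.1 0 0)) x.2) =O[l]
      (fun _ => (1 : ℝ)) := fun j k =>
    (one (contDiffOn_pd hΩ (contDiffOn_pd hΩ (hh 0) k.succ) j.succ)).congr'
      (ev fun N _ p hp => (pd_congr hΩ
        (fun q hq => pd_succ_hatg hΩ hsmooth hpos hτ N k hq) _ (hKΩ hp)).symm)
      EventuallyEq.rfl
  -- `∂_τ ĝ₀₀` grows like `N`, which a single factor `ĝ₀₀⁻¹` compensates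
  have hd0 : (fun x : ℕ × E n => (hatg g x.1 0 0 x.2)⁻¹ * pd 0 (hatg g x.1 0 0) x.2) =O[l]
      (fun _ => (1 : ℝ)) := by
    have hN : (fun x : ℕ × E n => (x.1 : ℝ) * ε x) =O[l] (fun _ => (1 : ℝ)) := by
      refine IsBigO.of_bound 1 (ev fun N hN p hp => ?_)
      have hN' : (N : ℝ) ≠ 0 := by exact_mod_cast (hN₀.trans_le hN).ne'
      simp [ε, hN']
    have h1 := (((isBigO_refl (fun x : ℕ × E n => (x.1 : ℝ)) l).mul hinv).trans hN).mul
      (one (contDiffOn_pd hΩ (contDiffOn_leading hτ) 0))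
    have h2 := (hinv.trans εone).mul (one (contDiffOn_pd hΩ (hh 0) 0))
    simp only [mul_one] at h1 h2
    refine (h1.add h2).congr' (ev fun N _ p hp => ?_) EventuallyEq.rfl
    simp only [pd_hatg hΩ hsmooth hpos hτ N 0 (hKΩ hp)]
    ring
  have hG0 : ∀ i j : Fin n, (fun x : ℕ × E n => hatChr g x.1 0 i.succ j.succ x.2) =O[l] ε := by
    intro i j
    simp only [hatChr_zero_succ_succ]
    exact (mulr hinv (one (hP i j))).const_mul_left _
  have hG00 : ∀ k : Fin n, (fun x : ℕ × E n => hatChr g x.1 0 k.succ 0 x.2) =O[l] ε := by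
    intro k
    simp only [hatChr_zero_succ_zero]
    exact (mulr hinv (hdk k)).const_mul_left _
  have hG000 : (fun x : ℕ × E n => hatChr g x.1 0 0 0 x.2) =O[l] (fun _ => (1 : ℝ)) := by
    simp only [hatChr_zero_zero_zero]
    exact hd0.const_mul_left _
  have hdG0 : ∀ i j : Fin n,
      (fun x : ℕ × E n => pd 0 (hatChr g x.1 0 i.succ j.succ) x.2) =O[l] ε := by
    intro i j
    refine (((mulr hinv (one (contDiffOn_pd hΩ (hP i j) 0))).sub
      (mulr (mulr hinv hd0) (one (hP i j)))).const_mul_left (-1 / 2)).congr'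
      (ev fun N hN p hp => ?_) EventuallyEq.rfl
    simp only [hatChr_zero_succ_succ]
    exact (pd_inv_mul 0 _ (ContDiffOn.diffAt hΩ (hh N) (hKΩ hp))
      (ContDiffOn.diffAt hΩ (hP i j) (hKΩ hp)) (hposK N hN p hp).ne').symm
  have hdG00 : ∀ i j : Fin n,
      (fun x : ℕ × E n => pd j.succ (hatChr g x.1 0 i.succ 0) x.2) =O[l] ε := by
    intro i j
    refine (((mulr hinv (hdjk j i)).sub
      (mulr (mulr hinv ((mulr hinv (hdk j)).trans εone)) (hdk i))).const_mul_left (1 / 2)).congr'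
      (ev fun N hN p hp => ?_) EventuallyEq.rfl
    simp only [hatChr_zero_succ_zero]
    exact (pd_inv_mul j.succ _ (ContDiffOn.diffAt hΩ (hh N) (hKΩ hp))
      (ContDiffOn.diffAt hΩ (contDiffOn_pd hΩ (hh N) _) (hKΩ hp)) (hposK N hN p hp).ne').symm
  have key : ∀ i j : Fin n,
      (fun x : ℕ × E n => hatRic g x.1 i.succ j.succ x.2 - Ric g i j x.2) =O[l] ε := by
    intro i j
    refine IsBigO.congr' (((hdG0 i j).sub (hdG00 i j)).add
      ((mulr (hG0 i j) (hG000.add (one (ContDiffOn.sum (s := Finset.univ) fun k _ => hB k k)))).add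
        (IsBigO.fun_sum (s := Finset.univ) fun k _ => mull (one (hC k i j)) (hG00 k))) |>.sub
      (((mulr (hG00 i) ((hG00 j).trans εone)).add
        (IsBigO.fun_sum (s := Finset.univ) fun k _ => mull (one (hB k i)) (hG0 j k))).add
        (IsBigO.fun_sum (s := Finset.univ) fun k _ => mulr (hG0 i k) (one (hB k j)))))
      (ev fun N hN p hp => ?_) EventuallyEq.rfl
    exact (hatRic_sub_Ric hΩ hsmooth hsymm hpos hτ N i j (hKΩ hp) (hposK N hN p hp).ne').symm
  -- summing over all components gives constants independent of `i` and `j`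
  have keysum : (fun x : ℕ × E n =>
      ∑ i : Fin n, ∑ j : Fin n, |hatRic g x.1 i.succ j.succ x.2 - Ric g i j x.2|) =O[l] ε :=
    IsBigO.fun_sum fun i _ => IsBigO.fun_sum fun j _ => (key i j).abs_left
  obtain ⟨C, hC0, hbound⟩ := keysum.exists_pos
  have hb := hbound.bound
  rw [hl, eventually_prod_principal_iff, eventually_atTop] at hb
  obtain ⟨N₁, hN₁⟩ := hb
  refine ⟨max N₀ N₁, C, hC0, fun N hN => ⟨⟨Ω ∩ hatg g N 0 0 ⁻¹' Set.Ioi 0,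
    (hh N).continuousOn.isOpen_inter_preimage hΩ isOpen_Ioi,
    fun p hp => ⟨hKΩ hp, hposK N (le_of_max_le_left hN) p hp⟩,
    Set.inter_subset_left, fun p hp => hp.2⟩, fun p hp i j => ?_⟩⟩
  have h1 := hN₁ N (le_of_max_le_right hN) p hp
  simp only [ε, norm_div, norm_one, RCLike.norm_natCast, mul_one_div] at h1
  refine le_trans ?_ ((le_abs_self _).trans h1)
  exact (Finset.single_le_sum (f := fun j => |hatRic g N i.succ j.succ p - Ric g i j p|)
      (fun _ _ => abs_nonneg _) (Finset.mem_univ j)).trans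
    (Finset.single_le_sum
      (f := fun i => ∑ j : Fin n, |hatRic g N i.succ j.succ p - Ric g i j p|)
      (fun _ _ => Finset.sum_nonneg fun _ _ => abs_nonneg _) (Finset.mem_univ i))
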